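/- Define G_G : ℝ → ℝ by G_G(θ) = √(20(3 − 2cos θ − cos 2θ)/(33 + 26cos θ + cos 2θ)). Then, as θ → 0, G_G(θ) = θ + θ⁵/1440 + O(θ⁷); that is, the function θ ↦ G_G(θ) − θ − θ⁵/1440 is O(θ⁷) in a neighborhood of 0, so the absolute phase error of fully Gauss-integrated C¹ quadratic isogeometric analysis is (1/5!)·θ⁵/12 + O(θ⁷) in magnitude. -/

import Mathlib

open Real Filter Asymptotics Topology

/-!
The squared frequency is the quotient of the Fourier symbols of the stiffness and mass stencils.
Comparing the Taylor polynomials of the two symbols shows that the quotient equals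
`θ² + θ⁶/720 + O(θ⁸)`, and this is `(θ + θ⁵/1440)²` up to `O(θ⁸)`. Since
`(√a - |b|)(√a + |b|) = a - b²`, taking the square root costs one power of `θ`.
-/

lemma re_sum_range_mul_I_pow (x : ℝ) (n : ℕ) :
    (∑ i ∈ Finset.range (2 * n), ((x : ℂ) * Complex.I) ^ i / (i.factorial : ℂ)).re =
      ∑ k ∈ Finset.range n, (-1) ^ k * x ^ (2 * k) / ((2 * k).factorial : ℝ) := by
  induction n with
  | zero => simp
  | succ n ih =>
    have even_term : ((x : ℂ) * Complex.I) ^ (2 * n) = (((-1) ^ n * x ^ (2 * n) : ℝ) : ℂ) := by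
      rw [mul_pow, pow_mul Complex.I, Complex.I_sq]
      push_cast
      ring
    have odd_term : ((x : ℂ) * Complex.I) ^ (2 * n + 1) =
        (((-1) ^ n * x ^ (2 * n + 1) : ℝ) : ℂ) * Complex.I := by
      rw [pow_succ, even_term]
      push_cast
      ring
    rw [Nat.mul_succ, Finset.sum_range_succ, Finset.sum_range_succ, Finset.sum_range_succ,
      Complex.add_re, Complex.add_re, ih, even_term, odd_term, Complex.div_natCast_re,
      Complex.div_natCast_re, Complex.ofReal_re, Complex.re_ofReal_mul, Complex.I_re, mul_zero,
      zero_div, add_zero]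

lemma cos_sub_sum_range_isBigO_pow (n : ℕ) :
    (fun x : ℝ =>
        Real.cos x - ∑ k ∈ Finset.range n, (-1) ^ k * x ^ (2 * k) / ((2 * k).factorial : ℝ))
      =O[𝓝 0] fun x : ℝ => x ^ (2 * n) := by
  have tendsto_mul_I : Tendsto (fun x : ℝ => (x : ℂ) * Complex.I) (𝓝 0) (𝓝 0) :=
    Continuous.tendsto' (by fun_prop) 0 0 (by simp)
  have exp_remainder :=
    (Complex.exp_sub_sum_range_isBigO_pow (2 * n)).comp_tendsto tendsto_mul_I
  have cos_remainder_eq_re (x : ℝ) :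
      Real.cos x - ∑ k ∈ Finset.range n, (-1) ^ k * x ^ (2 * k) / ((2 * k).factorial : ℝ) =
        (Complex.exp (x * Complex.I) - ∑ i ∈ Finset.range (2 * n),
          ((x : ℂ) * Complex.I) ^ i / (i.factorial : ℂ)).re := by
    rw [Complex.sub_re, Complex.exp_ofReal_mul_I_re, re_sum_range_mul_I_pow]
  simp only [cos_remainder_eq_re]
  refine (isBigO_of_le _ fun x => Complex.abs_re_le_norm _).trans (exp_remainder.trans ?_)
  exact isBigO_of_le _ fun x => by simp

lemma cos_const_mul_sub_sum_range_isBigO_pow (c : ℝ) (n : ℕ) :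
    (fun x : ℝ => Real.cos (c * x) -
        ∑ k ∈ Finset.range n, (-1) ^ k * (c * x) ^ (2 * k) / ((2 * k).factorial : ℝ))
      =O[𝓝 0] fun x : ℝ => x ^ (2 * n) :=
  ((cos_sub_sum_range_isBigO_pow n).comp_tendsto
    (Continuous.tendsto' (continuous_const_mul c) 0 0 (mul_zero c))).trans
      ((isBigO_const_mul_self c _ _).pow (2 * n))

lemma isBigO_mul_of_continuousAt {X : Type*} [TopologicalSpace X] {x : X} (f : X → ℝ) {g : X → ℝ}
    (hg : ContinuousAt g x) : (fun y => f y * g y) =O[𝓝 x] f := by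
  simpa only [mul_one] using (isBigO_refl f (𝓝 x)).mul (hg.isBigO_one ℝ)

lemma abs_sqrt_sub_abs_mul_abs_le (a b : ℝ) : |(√a - |b|)| * |b| ≤ |a - b ^ 2| := by
  rcases le_total 0 a with ha | ha
  · calc |(√a - |b|)| * |b| ≤ |(√a - |b|)| * (√a + |b|) := by
          gcongr
          exact le_add_of_nonneg_left (Real.sqrt_nonneg a)
      _ = |(√a - |b|) * (√a + |b|)| := by rw [abs_mul, abs_of_nonneg (by positivity : 0 ≤ √a + |b|)]
      _ = |a - b ^ 2| := by rw [mul_comm, ← sq_sub_sq, Real.sq_sqrt ha, sq_abs]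
  · calc |(√a - |b|)| * |b| = b ^ 2 := by
          rw [Real.sqrt_eq_zero_of_nonpos ha, zero_sub, abs_neg, abs_abs, abs_mul_abs_self, sq]
      _ ≤ b ^ 2 - a := by linarith
      _ ≤ |a - b ^ 2| := by rw [abs_sub_comm]; exact le_abs_self _

lemma isBigO_sqrt_sub_abs {α : Type*} {l : Filter α} {f g h : α → ℝ}
    (hfg : (fun x => f x - g x ^ 2) =O[l] fun x => g x * h x) :
    (fun x => √(f x) - |g x|) =O[l] h := by
  obtain ⟨C, C_nonneg, hC⟩ := hfg.exists_nonneg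
  refine IsBigO.of_bound C ?_
  filter_upwards [hC.bound] with x hx
  simp only [Real.norm_eq_abs] at hx ⊢
  rcases eq_or_ne (g x) 0 with hg | hg
  · have hf : f x = 0 := by simpa [hg] using hx
    rw [hf, hg, Real.sqrt_zero, abs_zero, sub_zero, abs_zero]
    positivity
  · refine le_of_mul_le_mul_right ?_ (abs_pos.mpr hg)
    calc |(√(f x) - |g x|)| * |g x| ≤ |f x - g x ^ 2| := abs_sqrt_sub_abs_mul_abs_le _ _
      _ ≤ C * |g x * h x| := hx
      _ = C * |h x| * |g x| := by rw [abs_mul]; ring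

lemma abs_add_odd_pow_div {n : ℕ} (hn : Odd n) {c : ℝ} (hc : 0 ≤ c) (x : ℝ) :
    |x + x ^ n / c| = |x| + |x| ^ n / c := by
  obtain ⟨m, rfl⟩ := hn
  have factor_nonneg : 0 ≤ 1 + x ^ (2 * m) / c := by
    rw [pow_mul]
    positivity
  calc |x + x ^ (2 * m + 1) / c| = |x * (1 + x ^ (2 * m) / c)| := by ring_nf
    _ = |x| * (1 + |x| ^ (2 * m) / c) := by
      rw [abs_mul, abs_of_nonneg factor_nonneg, (even_two_mul m).pow_abs]
    _ = |x| + |x| ^ (2 * m + 1) / c := by ring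

/-- The Fourier symbol of the stiffness stencil `(1/(6h))(−1, −2, 6, −2, −1)` at the normalized
wavenumber `θ = kh`, multiplied by `60h`. -/
noncomputable def stiffnessSymbol (θ : ℝ) : ℝ :=
  20 * (3 - 2 * Real.cos θ - Real.cos (2 * θ))

/-- The Fourier symbol of the mass stencil `(h/120)(1, 26, 66, 26, 1)` at the normalized
wavenumber `θ = kh`, multiplied by `60/h`, so that `stiffnessSymbol θ / massSymbol θ` is the
squared discrete frequency `(ωʰh)²`. -/
noncomputable def massSymbol (θ : ℝ) : ℝ :=
  33 + 26 * Real.cos θ + Real.cos (2 * θ)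

lemma massSymbol_pos (θ : ℝ) : 0 < massSymbol θ := by
  have := Real.neg_one_le_cos θ
  have := Real.neg_one_le_cos (2 * θ)
  unfold massSymbol
  linarith

lemma massSymbol_inv_isBigO_one : (fun θ => (massSymbol θ)⁻¹) =O[𝓝 0] fun _ => (1 : ℝ) := by
  have massSymbol_continuous : Continuous massSymbol := by unfold massSymbol; fun_prop
  exact (massSymbol_continuous.inv₀ fun θ => (massSymbol_pos θ).ne').continuousAt.isBigO_one ℝ

lemma stiffnessSymbol_sub_isBigO :
    (fun θ => stiffnessSymbol θ - (60 * θ ^ 2 - 15 * θ ^ 4 + 11 / 6 * θ ^ 6))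
      =O[𝓝 0] fun θ : ℝ => θ ^ 8 := by
  refine (((cos_sub_sum_range_isBigO_pow 4).const_mul_left (-40)).add
    ((cos_const_mul_sub_sum_range_isBigO_pow 2 4).const_mul_left (-20))).congr_left fun θ => ?_
  simp only [stiffnessSymbol, Finset.sum_range_succ, Finset.sum_range_zero, Nat.factorial]
  push_cast
  ring

lemma massSymbol_sub_isBigO :
    (fun θ => massSymbol θ - (60 - 15 * θ ^ 2 + 7 / 4 * θ ^ 4)) =O[𝓝 0] fun θ : ℝ => θ ^ 6 := by
  refine (((cos_sub_sum_range_isBigO_pow 3).const_mul_left 26).add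
    (cos_const_mul_sub_sum_range_isBigO_pow 2 3)).congr_left fun θ => ?_
  simp only [massSymbol, Finset.sum_range_succ, Finset.sum_range_zero, Nat.factorial]
  push_cast
  ring

lemma stiffnessSymbol_sub_mul_massSymbol_isBigO :
    (fun θ => stiffnessSymbol θ - (θ ^ 2 + θ ^ 6 / 720) * massSymbol θ)
      =O[𝓝 0] fun θ : ℝ => θ ^ 8 := by
  have eigenvalue_isBigO : (fun θ : ℝ => θ ^ 2 + θ ^ 6 / 720) =O[𝓝 0] fun θ => θ ^ 2 := by
    refine (isBigO_mul_of_continuousAt (fun θ => θ ^ 2)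
      (g := fun θ => 1 + θ ^ 4 / 720) (by fun_prop)).congr_left fun θ => ?_
    ring
  have mass_remainder : (fun θ => (θ ^ 2 + θ ^ 6 / 720) *
      (massSymbol θ - (60 - 15 * θ ^ 2 + 7 / 4 * θ ^ 4))) =O[𝓝 0] fun θ : ℝ => θ ^ 8 :=
    (eigenvalue_isBigO.mul massSymbol_sub_isBigO).congr_right fun θ => by ring
  have taylor_remainder : (fun θ : ℝ => θ ^ 8 * (1 / 48 - 7 / 2880 * θ ^ 2))
      =O[𝓝 0] fun θ => θ ^ 8 :=
    isBigO_mul_of_continuousAt (fun θ => θ ^ 8) (by fun_prop)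
  exact ((stiffnessSymbol_sub_isBigO.sub mass_remainder).add taylor_remainder).congr_left
    fun θ => by ring

lemma stiffnessSymbol_div_massSymbol_sub_isBigO :
    (fun θ => stiffnessSymbol θ / massSymbol θ - (θ ^ 2 + θ ^ 6 / 720))
      =O[𝓝 0] fun θ : ℝ => θ ^ 8 := by
  refine (stiffnessSymbol_sub_mul_massSymbol_isBigO.mul massSymbol_inv_isBigO_one).congr
    (fun θ => ?_) fun θ => mul_one _
  have := (massSymbol_pos θ).ne'
  field_simp

lemma stiffnessSymbol_div_massSymbol_sub_sq_isBigO :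
    (fun θ => stiffnessSymbol θ / massSymbol θ - (θ + θ ^ 5 / 1440) ^ 2)
      =O[𝓝 0] fun θ => (θ + θ ^ 5 / 1440) * θ ^ 7 := by
  have square_remainder : (fun θ : ℝ => θ ^ 8 * (θ ^ 2 / 1440 ^ 2)) =O[𝓝 0] fun θ => θ ^ 8 :=
    isBigO_mul_of_continuousAt (fun θ => θ ^ 8) (by fun_prop)
  have id_isBigO : (fun θ : ℝ => θ) =O[𝓝 0] fun θ => θ + θ ^ 5 / 1440 :=
    isBigO_of_le _ fun θ => by
      rw [Real.norm_eq_abs, Real.norm_eq_abs, abs_add_odd_pow_div (by decide) (by norm_num)]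
      exact le_add_of_nonneg_right (by positivity)
  calc (fun θ => stiffnessSymbol θ / massSymbol θ - (θ + θ ^ 5 / 1440) ^ 2)
      = fun θ => stiffnessSymbol θ / massSymbol θ - (θ ^ 2 + θ ^ 6 / 720)
          - θ ^ 8 * (θ ^ 2 / 1440 ^ 2) := by ext θ; ring
    _ =O[𝓝 0] fun θ => θ ^ 8 := stiffnessSymbol_div_massSymbol_sub_isBigO.sub square_remainder
    _ = fun θ => θ * θ ^ 7 := by ext θ; ring
    _ =O[𝓝 0] fun θ => (θ + θ ^ 5 / 1440) * θ ^ 7 := id_isBigO.mul (isBigO_refl _ _)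

theorem iga_quadratic_gauss_dispersion_expansion_general :
    (fun θ : ℝ =>
        Real.sqrt (20 * (3 - 2 * Real.cos θ - Real.cos (2 * θ))
            / (33 + 26 * Real.cos θ + Real.cos (2 * θ)))
          - |θ| - |θ| ^ 5 / 1440)
      =O[𝓝 (0 : ℝ)] fun θ : ℝ => θ ^ 7 := by
  refine (isBigO_sqrt_sub_abs stiffnessSymbol_div_massSymbol_sub_sq_isBigO).congr_left fun θ => ?_
  rw [abs_add_odd_pow_div (by decide) (by norm_num), sub_sub]
  rfl

/-- Dispersion expansion for fully Gauss-integrated `C¹` quadratic isogeometric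
analysis: the discrete frequency function
`G_G(θ) = √(20(3 − 2cos θ − cos 2θ)/(33 + 26cos θ + cos 2θ))` satisfies
`G_G(θ) = θ + θ⁵/1440 + O(θ⁷)` as `θ → 0`, i.e. its absolute phase error is
`(1/5!)·θ⁵/12 + O(θ⁷)`. -/
theorem iga_quadratic_gauss_dispersion_expansion :
    (fun θ : ℝ =>
        Real.sqrt (20 * (3 - 2 * Real.cos θ - Real.cos (2 * θ))
            / (33 + 26 * Real.cos θ + Real.cos (2 * θ)))
          - θ - θ ^ 5 / 1440)
      =O[𝓝[>] (0 : ℝ)] fun θ : ℝ => θ ^ 7 := by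
  refine (iga_quadratic_gauss_dispersion_expansion_general.mono nhdsWithin_le_nhds).congr' ?_ .rfl
  filter_upwards [self_mem_nhdsWithin] with θ hθ using by rw [abs_of_pos hθ]
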